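/- arXiv:1010.1709 — 5 statements merged into one kernel-verified Lean document; each statement's English description precedes it below -/
import Mathlib

section
/- For every closed walk p based at a vertex of the complete graph K₄, the sum over the darts of p of their assigned Gyroid vectors equals the zero vector of ℝ³ if and only if p is balanced, i.e., for every dart d, the number of occurrences of d among the darts of p equals the number of occurrences of the reversed dart of d. -/
/-- The complete graph on the four vertices `{A,B,C,D}` (as `Fin 4`, `A=0,B=1,C=2,D=3`). -/
abbrev GyrK4 : SimpleGraph (Fin 4) := ⊤

/-- The assignment of Gyroid vectors in `ℝ³` to ordered pairs of vertices of `K₄`: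
`A→B ↦ e₁`, `A→C ↦ e₂`, `A→D ↦ e₃`, `D→C ↦ e₄`, `D→B ↦ e₅`, `B→C ↦ e₆`,
with the reversed pair assigned the negative of the vector. -/
noncomputable def gyrVec : ℕ → ℕ → (Fin 3 → ℝ)
  | 0, 1 => ![-(1/4), 1/4, 0]        -- e₁
  | 1, 0 => ![1/4, -(1/4), 0]        -- -e₁
  | 0, 2 => ![0, -(1/4), 1/4]        -- e₂
  | 2, 0 => ![0, 1/4, -(1/4)]        -- -e₂
  | 0, 3 => ![1/4, 0, -(1/4)]        -- e₃
  | 3, 0 => ![-(1/4), 0, 1/4]        -- -e₃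
  | 3, 2 => ![1/4, 1/4, 0]           -- e₄
  | 2, 3 => ![-(1/4), -(1/4), 0]     -- -e₄
  | 3, 1 => ![0, -(1/4), -(1/4)]     -- e₅
  | 1, 3 => ![0, 1/4, 1/4]           -- -e₅
  | 1, 2 => ![-(1/4), 0, -(1/4)]     -- e₆
  | 2, 1 => ![1/4, 0, 1/4]           -- -e₆
  | _, _ => 0

/-- The Gyroid vector assigned to a dart of `K₄`. -/
noncomputable def gyrDartVec (d : GyrK4.Dart) : Fin 3 → ℝ := gyrVec d.toProd.1.val d.toProd.2.val

/-- Number of occurrences of the ordered pair `(a, b)` in a list of darts, as a real. -/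
noncomputable def gyrN (l : List GyrK4.Dart) (a b : Fin 4) : ℝ :=
  ((l.map (fun d => d.toProd)).count (a, b) : ℕ)

lemma gyrN_nil (a b : Fin 4) : gyrN [] a b = 0 := by simp [gyrN]

lemma gyrN_cons (d : GyrK4.Dart) (l : List GyrK4.Dart) (a b : Fin 4) :
    gyrN (d :: l) a b = gyrN l a b + if d.toProd = (a, b) then 1 else 0 := by
  simp only [gyrN, List.map_cons, List.count_cons, beq_iff_eq]
  push_cast
  rfl

lemma gyrN_dart (l : List GyrK4.Dart) (d : GyrK4.Dart) :
    (l.count d : ℝ) = gyrN l d.toProd.1 d.toProd.2 := by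
  unfold gyrN
  rw [← List.count_map_of_injective l (fun d : GyrK4.Dart => d.toProd)
    (SimpleGraph.Dart.toProd_injective)]

lemma gyr_sum (l : List GyrK4.Dart) : (l.map gyrDartVec).sum =
    (gyrN l 0 1 - gyrN l 1 0) • gyrVec 0 1 + (gyrN l 0 2 - gyrN l 2 0) • gyrVec 0 2
    + (gyrN l 0 3 - gyrN l 3 0) • gyrVec 0 3 + (gyrN l 3 2 - gyrN l 2 3) • gyrVec 3 2
    + (gyrN l 3 1 - gyrN l 1 3) • gyrVec 3 1 + (gyrN l 1 2 - gyrN l 2 1) • gyrVec 1 2 := by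
  induction l with
  | nil => simp [gyrN_nil]
  | cons d l ih =>
    rw [List.map_cons, List.sum_cons, ih]
    simp only [gyrN_cons]
    obtain ⟨⟨a, b⟩, h⟩ := d
    fin_cases a <;> fin_cases b <;> first
      | exact absurd rfl (GyrK4.ne_of_adj h)
      | (ext i; fin_cases i <;> simp [gyrDartVec, gyrVec] <;> ring)

lemma gyr_flow {u w : Fin 4} (p : GyrK4.Walk u w) (a : Fin 4) :
    ∑ b, (gyrN p.darts a b - gyrN p.darts b a)
      = (if u = a then 1 else 0) - (if w = a then 1 else 0) := by
  induction p with
  | nil => simp [gyrN_nil]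
  | @cons u v w h p ih =>
    have e : ∀ b, gyrN (SimpleGraph.Walk.cons h p).darts a b
        - gyrN (SimpleGraph.Walk.cons h p).darts b a = (gyrN p.darts a b - gyrN p.darts b a)
        + ((if (u, v) = (a, b) then 1 else 0) - (if (u, v) = (b, a) then 1 else 0)) := by
      intro b
      rw [SimpleGraph.Walk.darts_cons, gyrN_cons, gyrN_cons]
      ring
    rw [Finset.sum_congr rfl (fun b _ => e b), Finset.sum_add_distrib, ih,
      Finset.sum_sub_distrib]
    simp only [Prod.mk.injEq, ite_and, Finset.sum_ite_eq, Finset.mem_univ, if_true]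
    by_cases h1 : u = a <;> by_cases h2 : v = a <;> simp [h1, h2] <;> ring

/-- For every closed walk `p` based at a vertex of `K₄`, the sum over the
darts of `p` of their Gyroid vectors is `0 ∈ ℝ³` if and only if `p` is balanced: every
dart occurs in `p` as often as its reverse. -/
theorem gyroid_walk_sum_eq_zero_iff_balanced (v : Fin 4) (p : GyrK4.Walk v v) :
    (p.darts.map gyrDartVec).sum = 0 ↔
      ∀ d : GyrK4.Dart, p.darts.count d = p.darts.count d.symm := by
  rw [gyr_sum]
  constructor
  · intro h d
    have fA := gyr_flow p 0
    have fB := gyr_flow p 1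
    have fC := gyr_flow p 2
    have fD := gyr_flow p 3
    have hx := congrFun h 0
    have hy := congrFun h 1
    have hz := congrFun h 2
    simp only [Fin.sum_univ_four, sub_self] at fA fB fC fD
    simp [gyrVec] at hx hy hz
    have key : (p.darts.count d : ℝ) = p.darts.count d.symm := by
      rw [gyrN_dart, gyrN_dart]
      obtain ⟨⟨a, b⟩, hab⟩ := d
      change gyrN p.darts a b = gyrN p.darts b a
      clear h hab
      fin_cases a <;> fin_cases b <;> simp only [Fin.zero_eta, Fin.mk_one, Fin.reduceFinMk] <;>
        linarith
    exact_mod_cast key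
  · intro h
    have key : ∀ a b : Fin 4, a ≠ b → gyrN p.darts a b - gyrN p.darts b a = 0 := by
      intro a b hab
      have h1 : (p.darts.count (⟨(a, b), hab⟩ : GyrK4.Dart) : ℝ) = _ :=
        congrArg Nat.cast (h ⟨(a, b), hab⟩)
      rw [gyrN_dart, gyrN_dart] at h1
      exact sub_eq_zero.2 h1
    rw [key 0 1 (by decide), key 0 2 (by decide), key 0 3 (by decide), key 3 2 (by decide),
      key 3 1 (by decide), key 1 2 (by decide)]
    simp
end

section
/- Every closed walk p based at a vertex of the complete graph K₄ that has positive length, has no backtracking (no two consecutive darts of p are reverses of each other), and is balanced (for every dart d, the number of occurrences of d among the darts of p equals the number of occurrences of the reversed dart of d) has length at least 10. -/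
/-- An antisymmetric integer weight on ordered pairs, separating the six edges by powers of 32. -/
def gyrW (a b : Fin 4) : ℤ :=
  match a.val, b.val with
  | 0, 1 => 1
  | 0, 2 => 32
  | 0, 3 => 1024
  | 1, 2 => 32768
  | 1, 3 => 1048576
  | 2, 3 => 33554432
  | 1, 0 => -1
  | 2, 0 => -32
  | 3, 0 => -1024
  | 2, 1 => -32768
  | 3, 1 => -1048576
  | 3, 2 => -33554432
  | _, _ => 0

/-- Exhaustive search: no non-backtracking continuation of at most `n` steps brings the
accumulated weight to `0`. -/
def gyrOk : ℕ → Fin 4 → Fin 4 → ℤ → Bool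
  | 0, _, _, s => !(decide (s = 0))
  | n + 1, a, b, s => !(decide (s = 0)) &&
      [0, 1, 2, 3].all (fun c => decide (c = a) || decide (c = b) || gyrOk n b c (s + gyrW b c))

theorem gyrW_anti : ∀ a b : Fin 4, gyrW a b = - gyrW b a := by decide

set_option maxRecDepth 100000 in
theorem gyrOk_all : ∀ a b : Fin 4, a ≠ b → gyrOk 8 a b (gyrW a b) = true := by
  decide +kernel

/-- Weight of a dart. -/
def gyrD (d : GyrK4.Dart) : ℤ := gyrW d.fst d.snd

theorem gyrOk_ne {n : ℕ} {a b : Fin 4} {s : ℤ} (h : gyrOk n a b s = true) : s ≠ 0 := by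
  cases n <;> simp [gyrOk] at h
  · exact h
  · exact h.1

theorem gyrOk_step {n : ℕ} {a b : Fin 4} {s : ℤ} (h : gyrOk (n + 1) a b s = true)
    (c : Fin 4) (hca : c ≠ a) (hcb : c ≠ b) : gyrOk n b c (s + gyrW b c) = true := by
  rw [gyrOk, Bool.and_eq_true, List.all_eq_true] at h
  have := h.2 c (by fin_cases c <;> simp)
  simpa [hca, hcb] using this

theorem gyr_search {b u : Fin 4} (q : GyrK4.Walk b u) : ∀ (n : ℕ) (a : Fin 4) (hab : GyrK4.Adj a b)
    (s : ℤ), q.length ≤ n → gyrOk n a b s = true →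
    List.IsChain (fun d d' : GyrK4.Dart => d' ≠ d.symm) (⟨(a, b), hab⟩ :: q.darts) →
    s + (q.darts.map gyrD).sum ≠ 0 := by
  induction q with
  | nil =>
    intro n a hab s _ hok _
    simpa using gyrOk_ne hok
  | @cons b c u h q ih =>
    intro n a hab s hn hok hch
    obtain ⟨n, rfl⟩ : ∃ m, n = m + 1 := ⟨n - 1, by simp at hn; omega⟩
    rw [SimpleGraph.Walk.darts_cons, List.isChain_cons_cons] at hch
    have hca : c ≠ a := by
      rintro rfl
      exact hch.1 rfl
    have := ih n b h (s + gyrW b c) (by simpa using hn)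
      (gyrOk_step hok c hca h.ne') hch.2
    simpa [gyrD, add_assoc] using this

theorem gyr_sum_zero (l : List GyrK4.Dart) (hbal : ∀ d, l.count d = l.count d.symm) :
    (l.map gyrD).sum = 0 := by
  have h1 : (l.map gyrD).sum = ∑ d : GyrK4.Dart, l.count d • gyrD d := by
    rw [Finset.sum_list_map_count]
    apply Finset.sum_subset (Finset.subset_univ _)
    intro d _ hd
    rw [List.count_eq_zero_of_not_mem (by simpa using hd), zero_smul]
  have h2 : ∑ d : GyrK4.Dart, l.count d • gyrD d = ∑ d : GyrK4.Dart, -(l.count d • gyrD d) := by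
    rw [← Equiv.sum_comp (Function.Involutive.toPerm _
      (SimpleGraph.Dart.symm_involutive (G := GyrK4)))]
    apply Finset.sum_congr rfl
    intro d _
    have h3 : gyrD d.symm = - gyrD d := gyrW_anti _ _
    simp [← hbal d, h3]
  rw [Finset.sum_neg_distrib] at h2
  omega

/-- Every closed walk on `K₄` of positive length, with no backtracking
(no two consecutive darts are reverses of each other) and balanced (every dart occurs as
often as its reverse), has length at least `10`. -/
theorem gyroid_minimal_loop_length (v : Fin 4) (p : GyrK4.Walk v v)
    (hpos : 0 < p.length)
    (hnb : p.darts.Chain' (fun d d' => d' ≠ d.symm))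
    (hbal : ∀ d : GyrK4.Dart, p.darts.count d = p.darts.count d.symm) :
    10 ≤ p.length := by
  by_contra hlt
  have h0 := gyr_sum_zero p.darts hbal
  cases p with
  | nil => simp at hpos
  | @cons _ b _ h q =>
    have hl : q.length ≤ 8 := by
      simp at hlt
      omega
    refine gyr_search q 8 v h (gyrW v b) hl (gyrOk_all v b h.ne) hnb ?_
    simpa [gyrD] using h0
end

section
/- Let n ≥ 1 and let e : Fin n → ℝ³ be a sequence of vectors with Σᵢ e i = 0 (a closed polygonal loop). Define the partial sums f_j = e 1 + ⋯ + e j for 1 ≤ j ≤ n and the effective normal vector N_eff(e) = Σ_{j=1}^{n−1} f_j × e_{j+1}, where × denotes the cross product on ℝ³. Then: (a) for the cyclic shift e' defined by e'_i = e_{i+1} (indices taken mod n), N_eff(e') = N_eff(e); and (b) for the reversed loop e'' defined by e''_i = −e_{n+1−i}, N_eff(e'') = −N_eff(e). -/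
open Finset in
/-- The effective normal vector of a closed polygonal loop with edge vectors
`e 0, e 1, …, e (n-1)` in `ℝ³`:
`N_eff = Σ_{j=1}^{n−1} f_j × e_{j+1}` where `f_j = e₁ + ⋯ + e_j` (here written with
`0`-based indices: `N_eff = Σ_{j=0}^{n−2} (Σ_{i=0}^{j} eᵢ) × e_{j+1}`). -/
noncomputable def effectiveNormal (n : ℕ) (e : ℕ → (Fin 3 → ℝ)) : Fin 3 → ℝ :=
  ∑ j ∈ Finset.range (n - 1),
    crossProduct (∑ i ∈ Finset.range (j + 1), e i) (e (j + 1))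

theorem effectiveNormal_succ_eq (m : ℕ) (e : ℕ → (Fin 3 → ℝ)) :
    effectiveNormal (m + 1) e =
      ∑ j ∈ Finset.range (m + 1), crossProduct (∑ i ∈ Finset.range j, e i) (e j) := by
  rw [Finset.sum_range_succ']
  simp [effectiveNormal]

/-- For a closed polygonal loop `e 0, …, e (n-1)` in `ℝ³` (edge vectors
summing to zero), the effective normal vector is invariant under cyclic shift of the edges
and changes sign under reversal of the loop (`e''ᵢ = −e_{n+1−i}`, one-based, i.e.
`e'' i = −e (n−1−i)`, zero-based). -/
theorem effectiveNormal_cyclic_and_reverse (n : ℕ) (hn : 1 ≤ n)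
    (e : ℕ → (Fin 3 → ℝ)) (hsum : ∑ i ∈ Finset.range n, e i = 0) :
    effectiveNormal n (fun i => e ((i + 1) % n)) = effectiveNormal n e ∧
    effectiveNormal n (fun i => -e (n - 1 - i)) = -effectiveNormal n e := by
  obtain ⟨m, rfl⟩ : ∃ m, n = m + 1 := ⟨n - 1, by omega⟩
  have hs : ∀ j, ∑ i ∈ Finset.range j, e (i + 1) = ∑ i ∈ Finset.range (j + 1), e i - e 0 := by
    intro j
    rw [Finset.sum_range_succ' e j]
    simp
  constructor
  · have hP : ∀ j ≤ m, ∑ i ∈ Finset.range j, e ((i + 1) % (m + 1)) =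
        ∑ i ∈ Finset.range (j + 1), e i - e 0 := by
      intro j hj
      rw [← hs]
      refine Finset.sum_congr rfl fun i hi => ?_
      rw [Nat.mod_eq_of_lt]
      have := Finset.mem_range.1 hi
      omega
    rw [effectiveNormal_succ_eq, Finset.sum_range_succ, hP m le_rfl, hsum]
    have h1 : ∑ j ∈ Finset.range m, crossProduct
          (∑ i ∈ Finset.range j, e ((i + 1) % (m + 1))) (e ((j + 1) % (m + 1))) =
        ∑ j ∈ Finset.range m, (crossProduct (∑ i ∈ Finset.range (j + 1), e i) (e (j + 1))
          - crossProduct (e 0) (e (j + 1))) := by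
      refine Finset.sum_congr rfl fun j hj => ?_
      have := Finset.mem_range.1 hj
      rw [hP j (by omega), Nat.mod_eq_of_lt (by omega), map_sub, LinearMap.sub_apply]
    rw [h1, Finset.sum_sub_distrib, ← map_sum, hs m, hsum]
    simp [effectiveNormal]
  · have hP : ∀ j ≤ m + 1, ∑ i ∈ Finset.range j, -e (m - i) =
        ∑ i ∈ Finset.range (m + 1 - j), e i := by
      intro j
      induction j with
      | zero => intro _; simp [hsum]
      | succ k ih =>
        intro hk
        rw [Finset.sum_range_succ, ih (by omega), show m + 1 - k = (m - k) + 1 by omega,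
          Finset.sum_range_succ, show m + 1 - (k + 1) = m - k by omega]
        simp
    rw [effectiveNormal_succ_eq, effectiveNormal_succ_eq, ← Finset.sum_range_reflect,
      ← Finset.sum_neg_distrib]
    refine Finset.sum_congr rfl fun j hj => ?_
    have := Finset.mem_range.1 hj
    simp only [Nat.add_sub_cancel]
    rw [hP _ (by omega), show m + 1 - (m - j) = j + 1 by omega,
      show m - (m - j) = j by omega, Finset.sum_range_succ]
    rw [map_neg, map_add, LinearMap.add_apply, cross_self, add_zero]
end

section
/- Let F ∈ M₄(ℂ) be the matrix all of whose entries equal 1, let K := F − I (the adjacency matrix of the complete graph on four vertices), and let D := diag(1,1,−1,−1). Then the unital subalgebra of M₄(ℂ) generated by K and D equals the set of all matrices of the form [[a,b,c,c],[b,a,c,c],[d,d,e,f],[d,d,f,e]] with a,b,c,d,e,f ∈ ℂ; in particular this algebra is a proper 6-dimensional subalgebra of M₄(ℂ). -/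
/-- `F ∈ M₄(ℂ)`: the all-ones matrix. -/
def allOnes4 : Matrix (Fin 4) (Fin 4) ℂ := Matrix.of fun _ _ => 1

/-- `K = F − I`: the adjacency matrix of the complete graph on four vertices. -/
def K4adj : Matrix (Fin 4) (Fin 4) ℂ := allOnes4 - 1

/-- The parametrization of the six-dimensional space. -/
def sixMap : (Fin 6 → ℂ) →ₗ[ℂ] Matrix (Fin 4) (Fin 4) ℂ where
  toFun v := !![v 0, v 1, v 2, v 2; v 1, v 0, v 2, v 2; v 3, v 3, v 4, v 5; v 3, v 3, v 5, v 4]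
  map_add' v w := by
    ext i j; fin_cases i <;> fin_cases j <;> simp
  map_smul' r v := by
    ext i j; fin_cases i <;> fin_cases j <;> simp

theorem sixMap_injective : Function.Injective sixMap := by
  intro v w h
  have h' : ∀ i j, sixMap v i j = sixMap w i j := fun i j => by rw [h]
  ext i
  fin_cases i
  · simpa [sixMap] using h' 0 0
  · simpa [sixMap] using h' 0 1
  · simpa [sixMap] using h' 0 2
  · simpa [sixMap] using h' 2 0
  · simpa [sixMap] using h' 2 2
  · simpa [sixMap] using h' 2 3

theorem K4adj_eq : K4adj = !![0, 1, 1, 1; 1, 0, 1, 1; 1, 1, 0, 1; 1, 1, 1, 0] := by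
  ext i j; fin_cases i <;> fin_cases j <;> simp [K4adj, allOnes4]

theorem diagD_eq : (Matrix.diagonal ![1, 1, -1, -1] : Matrix (Fin 4) (Fin 4) ℂ) =
    !![1, 0, 0, 0; 0, 1, 0, 0; 0, 0, -1, 0; 0, 0, 0, -1] := by
  ext i j; fin_cases i <;> fin_cases j <;> simp [Matrix.diagonal]

theorem coe_adjoin_K_D :
    (Algebra.adjoin ℂ
        ({K4adj, Matrix.diagonal ![1, 1, -1, -1]} : Set (Matrix (Fin 4) (Fin 4) ℂ)) :
        Set (Matrix (Fin 4) (Fin 4) ℂ)) =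
      {M : Matrix (Fin 4) (Fin 4) ℂ |
        ∃ a b c d e f : ℂ,
          M = !![a, b, c, c; b, a, c, c; d, d, e, f; d, d, f, e]} := by
  apply Set.Subset.antisymm
  · intro M hM
    induction hM using Algebra.adjoin_induction with
    | mem x hx =>
      rcases hx with rfl | rfl
      · exact ⟨0, 1, 1, 1, 0, 1, K4adj_eq⟩
      · exact ⟨1, 0, 0, 0, -1, 0, diagD_eq⟩
    | algebraMap r =>
      refine ⟨r, 0, 0, 0, r, 0, ?_⟩
      ext i j; fin_cases i <;> fin_cases j <;> simp [Matrix.algebraMap_matrix_apply]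
    | add x y _ _ hx hy =>
      obtain ⟨a, b, c, d, e, f, rfl⟩ := hx
      obtain ⟨a', b', c', d', e', f', rfl⟩ := hy
      refine ⟨a + a', b + b', c + c', d + d', e + e', f + f', ?_⟩
      ext i j; fin_cases i <;> fin_cases j <;> simp
    | mul x y _ _ hx hy =>
      obtain ⟨a, b, c, d, e, f, rfl⟩ := hx
      obtain ⟨a', b', c', d', e', f', rfl⟩ := hy
      refine ⟨a * a' + b * b' + 2 * c * d', a * b' + b * a' + 2 * c * d',
        (a + b) * c' + c * (e' + f'), d * (a' + b') + (e + f) * d',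
        2 * d * c' + e * e' + f * f', 2 * d * c' + e * f' + f * e', ?_⟩
      ext i j; fin_cases i <;> fin_cases j <;>
        simp [Matrix.mul_apply, Fin.sum_univ_four] <;> ring
  · rintro M ⟨a, b, c, d, e, f, rfl⟩
    set S := Algebra.adjoin ℂ
        ({K4adj, Matrix.diagonal ![1, 1, -1, -1]} : Set (Matrix (Fin 4) (Fin 4) ℂ)) with hS
    have hK : K4adj ∈ S := Algebra.subset_adjoin (by simp)
    have hD : Matrix.diagonal ![1, 1, -1, -1] ∈ S := Algebra.subset_adjoin (by simp)
    have h1 : (!![1, 0, 0, 0; 0, 1, 0, 0; 0, 0, 0, 0; 0, 0, 0, 0] :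
        Matrix (Fin 4) (Fin 4) ℂ) ∈ S := by
      convert S.smul_mem (S.add_mem S.one_mem hD) (1 / 2 : ℂ) using 1
      rw [diagD_eq]
      ext i j; fin_cases i <;> fin_cases j <;> norm_num
    have h2 : (!![0, 0, 0, 0; 0, 0, 0, 0; 0, 0, 1, 0; 0, 0, 0, 1] :
        Matrix (Fin 4) (Fin 4) ℂ) ∈ S := by
      convert S.sub_mem S.one_mem h1 using 1
      ext i j; fin_cases i <;> fin_cases j <;> simp
    rw [K4adj_eq] at hK
    have h := S.add_mem (S.add_mem (S.add_mem (S.smul_mem h1 a)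
      (S.smul_mem (S.mul_mem (S.mul_mem h1 hK) h1) b))
      (S.add_mem (S.smul_mem (S.mul_mem (S.mul_mem h1 hK) h2) c)
      (S.smul_mem (S.mul_mem (S.mul_mem h2 hK) h1) d)))
      (S.add_mem (S.smul_mem h2 e) (S.smul_mem (S.mul_mem (S.mul_mem h2 hK) h2) f))
    rw [SetLike.mem_coe]
    convert h using 1
    ext i j; fin_cases i <;> fin_cases j <;> simp [Matrix.mul_apply, Fin.sum_univ_four]

/-- The unital subalgebra of `M₄(ℂ)` generated by `K = F − I` and
`D = diag(1,1,−1,−1)` equals the set of matrices of the form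
`[[a,b,c,c],[b,a,c,c],[d,d,e,f],[d,d,f,e]]`; in particular it is a proper 6-dimensional
subalgebra of `M₄(ℂ)`. -/
theorem adjoin_K_D_eq_six_dim :
    (Algebra.adjoin ℂ
        ({K4adj, Matrix.diagonal ![1, 1, -1, -1]} : Set (Matrix (Fin 4) (Fin 4) ℂ)) :
        Set (Matrix (Fin 4) (Fin 4) ℂ)) =
      {M : Matrix (Fin 4) (Fin 4) ℂ |
        ∃ a b c d e f : ℂ,
          M = !![a, b, c, c; b, a, c, c; d, d, e, f; d, d, f, e]} ∧
    Algebra.adjoin ℂ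
        ({K4adj, Matrix.diagonal ![1, 1, -1, -1]} : Set (Matrix (Fin 4) (Fin 4) ℂ)) ≠ ⊤ ∧
    Module.finrank ℂ
        (Algebra.adjoin ℂ
          ({K4adj, Matrix.diagonal ![1, 1, -1, -1]} : Set (Matrix (Fin 4) (Fin 4) ℂ))) = 6 := by
  have hrank : Module.finrank ℂ
        (Algebra.adjoin ℂ
          ({K4adj, Matrix.diagonal ![1, 1, -1, -1]} : Set (Matrix (Fin 4) (Fin 4) ℂ))) = 6 := by
    have hr : Subalgebra.toSubmodule (Algebra.adjoin ℂ
          ({K4adj, Matrix.diagonal ![1, 1, -1, -1]} : Set (Matrix (Fin 4) (Fin 4) ℂ))) =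
        LinearMap.range sixMap := by
      apply SetLike.coe_injective
      rw [Subalgebra.coe_toSubmodule, coe_adjoin_K_D]
      ext M
      constructor
      · rintro ⟨a, b, c, d, e, f, rfl⟩
        exact ⟨![a, b, c, d, e, f], rfl⟩
      · rintro ⟨v, rfl⟩
        exact ⟨v 0, v 1, v 2, v 3, v 4, v 5, rfl⟩
    rw [← Subalgebra.finrank_toSubmodule, hr,
      LinearMap.finrank_range_of_inj sixMap_injective]
    simp
  refine ⟨coe_adjoin_K_D, ?_, hrank⟩
  intro htop
  rw [htop, ← Subalgebra.finrank_toSubmodule, Algebra.top_toSubmodule, finrank_top,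
    Module.finrank_matrix] at hrank
  simp at hrank
end

section
/- Let F ∈ M₄(ℂ) be the matrix all of whose entries equal 1, let K := F − I, and let D' := diag(1,1,i,−i) where i is the imaginary unit. Then the unital subalgebra of M₄(ℂ) generated by K and D' equals the set of all matrices of the form [[a,b,c,d],[b,a,c,d],[e,e,g,h],[f,f,k,l]] with a,b,c,d,e,f,g,h,k,l ∈ ℂ; in particular this algebra is a proper 10-dimensional subalgebra of M₄(ℂ). -/
/-- The ten-dimensional algebra: the matrices commuting with the swap of the first two
coordinates. -/
def tenAlg : Subalgebra ℂ (Matrix (Fin 4) (Fin 4) ℂ) where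
  carrier := {M | M 1 1 = M 0 0 ∧ M 1 0 = M 0 1 ∧ M 1 2 = M 0 2 ∧ M 1 3 = M 0 3 ∧
    M 2 1 = M 2 0 ∧ M 3 1 = M 3 0}
  mul_mem' := by
    rintro A B ⟨a1, a2, a3, a4, a5, a6⟩ ⟨b1, b2, b3, b4, b5, b6⟩
    simp only [Set.mem_setOf_eq, Matrix.mul_apply, Fin.sum_univ_four, a1, a2, a3, a4, a5, a6,
      b1, b2, b3, b4, b5, b6]
    refine ⟨?_, ?_, ?_, ?_, ?_, ?_⟩ <;> ring
  add_mem' := by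
    rintro A B ⟨a1, a2, a3, a4, a5, a6⟩ ⟨b1, b2, b3, b4, b5, b6⟩
    simp only [Set.mem_setOf_eq, Matrix.add_apply, a1, a2, a3, a4, a5, a6,
      b1, b2, b3, b4, b5, b6, and_self]
  algebraMap_mem' := by
    intro r
    simp [Matrix.algebraMap_matrix_apply]

/-- The matrix with the given ten parameters. -/
def tenMat (v : Fin 10 → ℂ) : Matrix (Fin 4) (Fin 4) ℂ :=
  !![v 0, v 1, v 2, v 3; v 1, v 0, v 2, v 3; v 4, v 4, v 6, v 7; v 5, v 5, v 8, v 9]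

theorem tenMat_mem (v : Fin 10 → ℂ) : tenMat v ∈ tenAlg :=
  ⟨rfl, rfl, rfl, rfl, rfl, rfl⟩

theorem eq_tenMat {M : Matrix (Fin 4) (Fin 4) ℂ} (hM : M ∈ tenAlg) :
    M = tenMat ![M 0 0, M 0 1, M 0 2, M 0 3, M 2 0, M 3 0, M 2 2, M 2 3, M 3 2, M 3 3] := by
  obtain ⟨a1, a2, a3, a4, a5, a6⟩ := hM
  ext i j
  fin_cases i <;> fin_cases j <;> first | rfl | assumption

/-- Coordinates on the ten-dimensional algebra. -/
def tenEquiv : (Fin 10 → ℂ) ≃ₗ[ℂ] tenAlg where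
  toFun v := ⟨tenMat v, tenMat_mem v⟩
  invFun M := ![M.1 0 0, M.1 0 1, M.1 0 2, M.1 0 3, M.1 2 0, M.1 3 0, M.1 2 2, M.1 2 3,
    M.1 3 2, M.1 3 3]
  map_add' v w := by
    apply Subtype.ext
    ext i j
    fin_cases i <;> fin_cases j <;> rfl
  map_smul' r v := by
    apply Subtype.ext
    ext i j
    fin_cases i <;> fin_cases j <;> rfl
  left_inv v := by
    ext i
    fin_cases i <;> rfl
  right_inv M := Subtype.ext (eq_tenMat M.2).symm

theorem finrank_tenAlg : Module.finrank ℂ tenAlg = 10 := by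
  rw [← tenEquiv.finrank_eq]
  simp

theorem adjoin_eq_tenAlg :
    Algebra.adjoin ℂ
        ({K4adj, Matrix.diagonal ![1, 1, Complex.I, -Complex.I]} :
          Set (Matrix (Fin 4) (Fin 4) ℂ)) = tenAlg := by
  apply le_antisymm
  · rw [Algebra.adjoin_le_iff]
    rintro M (rfl | rfl)
    · refine ⟨?_, ?_, ?_, ?_, ?_, ?_⟩ <;> simp [K4adj, allOnes4, Matrix.one_apply]
    · refine ⟨?_, ?_, ?_, ?_, ?_, ?_⟩ <;> simp [Matrix.diagonal_apply]
  · intro M hM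
    rw [eq_tenMat hM]
    generalize ![M 0 0, M 0 1, M 0 2, M 0 3, M 2 0, M 3 0, M 2 2, M 2 3, M 3 2, M 3 3] = v
    set S := Algebra.adjoin ℂ
        ({K4adj, Matrix.diagonal ![1, 1, Complex.I, -Complex.I]} :
          Set (Matrix (Fin 4) (Fin 4) ℂ)) with hS
    have hK : K4adj ∈ S := Algebra.subset_adjoin (by simp)
    have hD : Matrix.diagonal ![1, 1, Complex.I, -Complex.I] ∈ S :=
      Algebra.subset_adjoin (by simp)
    have hF : allOnes4 ∈ S := by
      have h := S.add_mem hK S.one_mem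
      rwa [K4adj, sub_add_cancel] at h
    have hD2 := S.mul_mem hD hD
    rw [Matrix.diagonal_mul_diagonal] at hD2
    have hP : Matrix.diagonal ![1, 1, 0, 0] ∈ S := by
      convert S.smul_mem (S.add_mem S.one_mem hD2) (1 / 2 : ℂ) using 1
      ext i j
      fin_cases i <;> fin_cases j <;> simp <;> norm_num
    have hQ : Matrix.diagonal ![0, 0, 1, -1] ∈ S := by
      convert S.smul_mem (S.sub_mem hD hP) (-Complex.I) using 1
      ext i j
      fin_cases i <;> fin_cases j <;> simp
    have hP3 : Matrix.diagonal ![0, 0, 1, 0] ∈ S := by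
      convert S.smul_mem (S.add_mem (S.sub_mem S.one_mem hP) hQ) (1 / 2 : ℂ) using 1
      ext i j
      fin_cases i <;> fin_cases j <;> simp <;> norm_num
    have hP4 : Matrix.diagonal ![0, 0, 0, 1] ∈ S := by
      convert S.sub_mem hP3 hQ using 1
      ext i j
      fin_cases i <;> fin_cases j <;> simp
    have key : ∀ {p q : Fin 4 → ℂ}, Matrix.diagonal p ∈ S → Matrix.diagonal q ∈ S →
        ∀ c : ℂ, (Matrix.of fun i j => c * (p i * q j)) ∈ S := by
      intro p q hp hq c
      convert S.smul_mem (S.mul_mem (S.mul_mem hp hF) hq) c using 1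
      ext i j
      simp [allOnes4]
    have hsum := S.add_mem (S.smul_mem hP (v 0 - v 1)) (S.add_mem (key hP hP (v 1))
      (S.add_mem (key hP hP3 (v 2)) (S.add_mem (key hP hP4 (v 3))
      (S.add_mem (key hP3 hP (v 4)) (S.add_mem (key hP4 hP (v 5))
      (S.add_mem (key hP3 hP3 (v 6)) (S.add_mem (key hP3 hP4 (v 7))
      (S.add_mem (key hP4 hP3 (v 8)) (key hP4 hP4 (v 9))))))))))
    convert hsum using 1
    ext i j
    fin_cases i <;> fin_cases j <;> simp [tenMat]

/-- The unital subalgebra of `M₄(ℂ)` generated by `K = F − I` and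
`D' = diag(1,1,i,−i)` equals the set of matrices of the form
`[[a,b,c,d],[b,a,c,d],[e,e,g,h],[f,f,k,l]]`; in particular it is a proper 10-dimensional
subalgebra of `M₄(ℂ)`. -/
theorem adjoin_K_D'_eq_ten_dim :
    (Algebra.adjoin ℂ
        ({K4adj, Matrix.diagonal ![1, 1, Complex.I, -Complex.I]} :
          Set (Matrix (Fin 4) (Fin 4) ℂ)) :
        Set (Matrix (Fin 4) (Fin 4) ℂ)) =
      {M : Matrix (Fin 4) (Fin 4) ℂ |
        ∃ a b c d e f g h k l : ℂ,
          M = !![a, b, c, d; b, a, c, d; e, e, g, h; f, f, k, l]} ∧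
    Algebra.adjoin ℂ
        ({K4adj, Matrix.diagonal ![1, 1, Complex.I, -Complex.I]} :
          Set (Matrix (Fin 4) (Fin 4) ℂ)) ≠ ⊤ ∧
    Module.finrank ℂ
        (Algebra.adjoin ℂ
          ({K4adj, Matrix.diagonal ![1, 1, Complex.I, -Complex.I]} :
            Set (Matrix (Fin 4) (Fin 4) ℂ))) = 10 := by
  rw [adjoin_eq_tenAlg]
  refine ⟨?_, ?_, finrank_tenAlg⟩
  · ext M
    constructor
    · intro hM
      exact ⟨_, _, _, _, _, _, _, _, _, _, eq_tenMat hM⟩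
    · rintro ⟨a, b, c, d, e, f, g, h, k, l, rfl⟩
      exact ⟨rfl, rfl, rfl, rfl, rfl, rfl⟩
  · intro h
    have hm : (Matrix.diagonal ![1, 0, 0, 0] : Matrix (Fin 4) (Fin 4) ℂ) ∈ tenAlg := by
      rw [h]
      exact Algebra.mem_top
    have h1 := hm.1
    simp at h1
end
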